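/- Let L, T > 0. Let u : [0,T] × ℝ → ℝ be smooth, L-periodic in x, with all partial derivatives bounded, solving the Kuramoto–Sivashinsky equation ∂_t u + ∂_x (u²/2) + ∂_x² u + ∂_x⁴ u = 0. Then there exists C > 0 such that for every τ ∈ (0,1] and every C¹ tuple q = (q₀, q₁, q₂, q₃), L-periodic in x, solving ∂_t q₀ + ∂_x (q₀²/2) + q₂ + ∂_x q₃ = 0, τ ∂_t q₁ − (∂_x q₂ − q₃) = 0, τ ∂_t q₂ − (∂_x q₁ − q₂) = 0, τ ∂_t q₃ + (∂_x q₀ − q₁) = 0, with initial data q_j(0,·) = ∂_x^j u(0,·) for j = 0, 1, 2, 3, one has sup_{t ∈ [0,T]} [ ‖u(t) − q₀(t)‖_{L²(0,L)} + Σ_{j=1}^{3} √τ ‖∂_x^j u(t) − q_j(t)‖_{L²(0,L)} ] ≤ C τ. -/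

import Mathlib

open MeasureTheory

/-- Partial derivative with respect to the first (time) variable. -/
noncomputable def pdt (u : ℝ → ℝ → ℝ) : ℝ → ℝ → ℝ :=
  fun t x => deriv (fun s => u s x) t

/-- Partial derivative with respect to the second (space) variable. -/
noncomputable def pdx (u : ℝ → ℝ → ℝ) : ℝ → ℝ → ℝ :=
  fun t x => deriv (fun y => u t y) x

open Function Set

/-!
Evaluated on the jet `(u, ∂ₓu, ∂ₓ²u, ∂ₓ³u)`, the three relaxation equations leave residuals of
order `τ`. Adding `τ ∂ₜ∂ₓ³u` to the second component and `-τ ∂ₜ∂ₓu` to the fourth improves the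
residuals of the second and fourth equations to order `τ²`; the other two remain of order `τ`. The
difference `e` between this corrected jet and a solution of the hyperbolic system satisfies a
balance law for the energy density `e₀² + τ (e₁² + e₂² + e₃²)` with a periodic flux and the
damping `-2 e₂²`. Young's inequality absorbs the residuals up to `O(τ²)`, so Grönwall bounds the
energy of `e` by `O(τ²)`. The correction itself has energy `O(τ³)`, and the weighted norm of the
error is at most a constant times the square root of its energy.
-/

section PartialDerivatives

variable {v w : ℝ → ℝ → ℝ} {m n : WithTop ℕ∞} {L : ℝ}

lemma hasDerivAt_fderiv_fst (hv : Differentiable ℝ (uncurry v)) (t x : ℝ) :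
    HasDerivAt (fun s => v s x) (fderiv ℝ (uncurry v) (t, x) (1, 0)) t :=
  (hv (t, x)).hasFDerivAt.comp_hasDerivAt (f := fun s : ℝ => (s, x)) t
    ((hasDerivAt_id t).prodMk (hasDerivAt_const t x))

lemma hasDerivAt_fderiv_snd (hv : Differentiable ℝ (uncurry v)) (t x : ℝ) :
    HasDerivAt (v t) (fderiv ℝ (uncurry v) (t, x) (0, 1)) x :=
  (hv (t, x)).hasFDerivAt.comp_hasDerivAt (f := fun y : ℝ => (t, y)) x
    ((hasDerivAt_const x t).prodMk (hasDerivAt_id x))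

lemma hasDerivAt_pdt (hv : Differentiable ℝ (uncurry v)) (t x : ℝ) :
    HasDerivAt (fun s => v s x) (pdt v t x) t :=
  (hasDerivAt_fderiv_fst hv t x).differentiableAt.hasDerivAt

lemma hasDerivAt_pdx (hv : Differentiable ℝ (uncurry v)) (t x : ℝ) :
    HasDerivAt (v t) (pdx v t x) x :=
  (hasDerivAt_fderiv_snd hv t x).differentiableAt.hasDerivAt

lemma pdt_add (hv : Differentiable ℝ (uncurry v)) (hw : Differentiable ℝ (uncurry w)) :
    pdt (v + w) = pdt v + pdt w :=
  funext₂ fun t x => ((hasDerivAt_pdt hv t x).add (hasDerivAt_pdt hw t x)).deriv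

lemma pdx_add (hv : Differentiable ℝ (uncurry v)) (hw : Differentiable ℝ (uncurry w)) :
    pdx (v + w) = pdx v + pdx w :=
  funext₂ fun t x => ((hasDerivAt_pdx hv t x).add (hasDerivAt_pdx hw t x)).deriv

lemma pdt_sub (hv : Differentiable ℝ (uncurry v)) (hw : Differentiable ℝ (uncurry w)) :
    pdt (v - w) = pdt v - pdt w :=
  funext₂ fun t x => ((hasDerivAt_pdt hv t x).sub (hasDerivAt_pdt hw t x)).deriv

lemma pdx_sub (hv : Differentiable ℝ (uncurry v)) (hw : Differentiable ℝ (uncurry w)) :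
    pdx (v - w) = pdx v - pdx w :=
  funext₂ fun t x => ((hasDerivAt_pdx hv t x).sub (hasDerivAt_pdx hw t x)).deriv

lemma pdt_const_smul (c : ℝ) (hv : Differentiable ℝ (uncurry v)) : pdt (c • v) = c • pdt v :=
  funext₂ fun t x => ((hasDerivAt_pdt hv t x).const_smul c).deriv

lemma pdx_const_smul (c : ℝ) (hv : Differentiable ℝ (uncurry v)) : pdx (c • v) = c • pdx v :=
  funext₂ fun t x => ((hasDerivAt_pdx hv t x).const_smul c).deriv

lemma pdx_sq_div_two (hv : Differentiable ℝ (uncurry v)) (t x : ℝ) :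
    pdx (fun s y => v s y ^ 2 / 2) t x = v t x * pdx v t x := by
  refine ((((hasDerivAt_pdx hv t x).pow 2).div_const 2).deriv).trans ?_
  simp only [Nat.cast_ofNat]
  ring

lemma contDiff_pdt (hv : ContDiff ℝ n (uncurry v)) (hmn : m + 1 ≤ n) :
    ContDiff ℝ m (uncurry (pdt v)) := by
  have hd := (hv.of_le (le_add_self.trans hmn)).differentiable one_ne_zero
  have h : uncurry (pdt v) = fun p => fderiv ℝ (uncurry v) p (1, 0) :=
    funext fun p => (hasDerivAt_fderiv_fst hd p.1 p.2).deriv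
  rw [h]
  exact (hv.fderiv_right hmn).clm_apply contDiff_const

lemma contDiff_pdx (hv : ContDiff ℝ n (uncurry v)) (hmn : m + 1 ≤ n) :
    ContDiff ℝ m (uncurry (pdx v)) := by
  have hd := (hv.of_le (le_add_self.trans hmn)).differentiable one_ne_zero
  have h : uncurry (pdx v) = fun p => fderiv ℝ (uncurry v) p (0, 1) :=
    funext fun p => (hasDerivAt_fderiv_snd hd p.1 p.2).deriv
  rw [h]
  exact (hv.fderiv_right hmn).clm_apply contDiff_const

lemma contDiff_pdx_iterate {j : ℕ} (hv : ContDiff ℝ n (uncurry v)) (hmn : m + j ≤ n) :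
    ContDiff ℝ m (uncurry (pdx^[j] v)) := by
  induction j generalizing m with
  | zero => exact hv.of_le (by simpa using hmn)
  | succ j ih =>
    rw [iterate_succ_apply']
    refine contDiff_pdx (ih (m := m + 1) ?_) le_rfl
    rwa [add_assoc, add_comm 1, ← Nat.cast_succ]

lemma periodic_pdt (hv : ∀ t, Periodic (v t) L) (t : ℝ) : Periodic (pdt v t) L := fun x => by
  simp only [pdt, fun s => hv s x]

lemma periodic_pdx (hv : ∀ t, Periodic (v t) L) (t : ℝ) : Periodic (pdx v t) L := fun x => by
  rw [pdx, pdx, ← deriv_comp_add_const, funext (hv t)]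

lemma periodic_pdx_iterate (hv : ∀ t, Periodic (v t) L) (j : ℕ) (t : ℝ) :
    Periodic (pdx^[j] v t) L := by
  induction j generalizing t with
  | zero => exact hv t
  | succ j ih =>
    rw [iterate_succ_apply']
    exact periodic_pdx ih t

end PartialDerivatives

section BalanceLaw

variable {v η F : ℝ → ℝ → ℝ} {L T K ε : ℝ}

lemma intervalIntegrable_of_continuous_uncurry (hv : Continuous (uncurry v)) (t a b : ℝ) :
    IntervalIntegrable (v t) volume a b :=
  (hv.comp (Continuous.prodMk_right t)).intervalIntegrable a b

lemma exists_abs_le_of_continuous {ι : Type*} [Finite ι] {v : ι → ℝ → ℝ → ℝ}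
    (hv : ∀ i, Continuous (uncurry (v i))) (a b c d : ℝ) :
    ∃ M, ∀ i, ∀ t ∈ Icc a b, ∀ x ∈ Icc c d, |v i t x| ≤ M := by
  choose M hM using fun i => (isCompact_Icc.prod isCompact_Icc).exists_bound_of_continuousOn
    (s := Icc a b ×ˢ Icc c d) (hv i).continuousOn
  obtain ⟨B, hB⟩ := (finite_range M).bddAbove
  exact ⟨B, fun i t ht x hx => (hM i (t, x) ⟨ht, hx⟩).trans (hB (mem_range_self i))⟩

lemma hasDerivAt_integral_of_contDiff (hv : ContDiff ℝ 1 (uncurry v)) (a b t : ℝ) :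
    HasDerivAt (fun s => ∫ x in a..b, v s x) (∫ x in a..b, pdt v t x) t := by
  have hc : Continuous (uncurry (pdt v)) := (contDiff_pdt (m := 0) hv le_rfl).continuous
  obtain ⟨M, hM⟩ := (isCompact_Icc.prod isCompact_uIcc).exists_bound_of_continuousOn
    (s := Icc (t - 1) (t + 1) ×ˢ uIcc a b) hc.continuousOn
  refine (intervalIntegral.hasDerivAt_integral_of_dominated_loc_of_deriv_le (bound := fun _ => M)
    (F := v) (F' := pdt v) (Icc_mem_nhds (sub_one_lt t) (lt_add_one t)) (.of_forall fun s => ?_)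
    ?_ ?_ ?_ intervalIntegrable_const ?_).2
  · exact (hv.continuous.comp (Continuous.prodMk_right s)).aestronglyMeasurable
  · exact intervalIntegrable_of_continuous_uncurry hv.continuous t a b
  · exact (hc.comp (Continuous.prodMk_right t)).aestronglyMeasurable
  · exact .of_forall fun x hx s hs => hM (s, x) ⟨hs, uIoc_subset_uIcc hx⟩
  · exact .of_forall fun x _ s _ => hasDerivAt_pdt (hv.differentiable one_ne_zero) s x

lemma integral_pdx_eq_zero (hF : ContDiff ℝ 1 (uncurry F)) {t : ℝ} (hper : Periodic (F t) L) :
    ∫ x in (0 : ℝ)..L, pdx F t x = 0 := by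
  rw [intervalIntegral.integral_eq_sub_of_hasDerivAt
    (fun x _ => hasDerivAt_pdx (hF.differentiable one_ne_zero) t x)
    (intervalIntegrable_of_continuous_uncurry (contDiff_pdx (m := 0) hF le_rfl).continuous t 0 L),
    hper.eq, sub_self]

lemma integral_pdt_le_of_balance (hL : 0 ≤ L) (hη : ContDiff ℝ 1 (uncurry η))
    (hF : ContDiff ℝ 1 (uncurry F)) {t : ℝ} (hper : Periodic (F t) L)
    (h : ∀ x ∈ Icc 0 L, pdt η t x ≤ pdx F t x + (K * η t x + ε)) :
    ∫ x in (0 : ℝ)..L, pdt η t x ≤ K * (∫ x in (0 : ℝ)..L, η t x) + L * ε := by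
  have iη := intervalIntegrable_of_continuous_uncurry hη.continuous t 0 L
  have iη' := intervalIntegrable_of_continuous_uncurry
    (contDiff_pdt (m := 0) hη le_rfl).continuous t 0 L
  have iF := intervalIntegrable_of_continuous_uncurry
    (contDiff_pdx (m := 0) hF le_rfl).continuous t 0 L
  have iS : IntervalIntegrable (fun x => K * η t x + ε) volume 0 L :=
    (iη.const_mul K).add intervalIntegrable_const
  calc ∫ x in (0 : ℝ)..L, pdt η t x
      ≤ ∫ x in (0 : ℝ)..L, (pdx F t x + (K * η t x + ε)) :=
        intervalIntegral.integral_mono_on hL iη' (iF.add iS) h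
    _ = K * (∫ x in (0 : ℝ)..L, η t x) + L * ε := by
        rw [intervalIntegral.integral_add iF iS, integral_pdx_eq_zero hF hper,
          intervalIntegral.integral_add (iη.const_mul K) intervalIntegrable_const,
          intervalIntegral.integral_const_mul, intervalIntegral.integral_const]
        simp

lemma integral_le_gronwallBound_of_balance (hL : 0 ≤ L) (hη : ContDiff ℝ 1 (uncurry η))
    (hF : ContDiff ℝ 1 (uncurry F)) (hper : ∀ t, Periodic (F t) L)
    (h : ∀ t ∈ Icc 0 T, ∀ x ∈ Icc 0 L, pdt η t x ≤ pdx F t x + (K * η t x + ε))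
    {δ : ℝ} (hδ : ∫ x in (0 : ℝ)..L, η 0 x ≤ δ) {t : ℝ} (ht : t ∈ Icc 0 T) :
    ∫ x in (0 : ℝ)..L, η t x ≤ gronwallBound δ K (L * ε) t := by
  have hΦ (s : ℝ) := hasDerivAt_integral_of_contDiff hη 0 L s
  simpa only [sub_zero] using le_gronwallBound_of_liminf_deriv_right_le
    (fun s _ => (hΦ s).continuousAt.continuousWithinAt)
    (fun s _ _ hr => (hΦ s).hasDerivWithinAt.liminf_right_slope_le hr) hδ
    (fun s hs => integral_pdt_le_of_balance hL hη hF (hper s) (h s (Ico_subset_Icc_self hs))) t ht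

lemma gronwallBound_mul_mul (c δ K ε x : ℝ) :
    gronwallBound (c * δ) K (c * ε) x = c * gronwallBound δ K ε x := by
  unfold gronwallBound
  split_ifs <;> ring

end BalanceLaw

section Energy

/-- The left-hand sides of the hyperbolic approximation with relaxation parameter `τ`. The four
unknowns `q₀, q₁, q₂, q₃` are the components of `q`, and `q` is a solution where all four
residuals vanish. -/
noncomputable def hyperbolicResidual (τ : ℝ) (q : Fin 4 → ℝ → ℝ → ℝ) : Fin 4 → ℝ → ℝ → ℝ
  | 0, t, x => pdt (q 0) t x + pdx (fun s y => q 0 s y ^ 2 / 2) t x + q 2 t x + pdx (q 3) t x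
  | 1, t, x => τ * pdt (q 1) t x - (pdx (q 2) t x - q 3 t x)
  | 2, t, x => τ * pdt (q 2) t x - (pdx (q 1) t x - q 2 t x)
  | 3, t, x => τ * pdt (q 3) t x + (pdx (q 0) t x - q 1 t x)

/-- The density of the energy for which the hyperbolic approximation is (up to lower-order
terms) dissipative. -/
def energyDensity (τ : ℝ) (e : Fin 4 → ℝ → ℝ → ℝ) (t x : ℝ) : ℝ :=
  e 0 t x ^ 2 + τ * (e 1 t x ^ 2 + e 2 t x ^ 2 + e 3 t x ^ 2)

/-- The flux of `energyDensity τ e`, where `e` is the difference of two states and `w` is the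
first component of the minuend. -/
noncomputable def energyFlux (w : ℝ → ℝ → ℝ) (e : Fin 4 → ℝ → ℝ → ℝ) (t x : ℝ) : ℝ :=
  -(w t x * e 0 t x ^ 2) + 2 / 3 * e 0 t x ^ 3 - 2 * (e 0 t x * e 3 t x)
    + 2 * (e 1 t x * e 2 t x)

/-- The powers of `τ` to which the four residuals have to vanish for an error of energy `O(τ²)`.
The first error component is controlled by the energy and the third by its damping, uniformly in
`τ`; the energy controls the other two only with weight `τ`, which costs one more power. -/
def residualOrder : Fin 4 → ℕ := ![1, 2, 1, 2]

variable {τ L T W N : ℝ} {n : WithTop ℕ∞} {w : ℝ → ℝ → ℝ} {e f v q : Fin 4 → ℝ → ℝ → ℝ}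

lemma energyDensity_nonneg (hτ : 0 ≤ τ) (t x : ℝ) : 0 ≤ energyDensity τ e t x := by
  unfold energyDensity
  positivity

lemma energyDensity_sub_le (hτ : 0 ≤ τ) (t x : ℝ) :
    energyDensity τ (e - f) t x ≤ 2 * (energyDensity τ e t x + energyDensity τ f t x) := by
  have h : 0 ≤ energyDensity τ (e + f) t x := energyDensity_nonneg hτ t x
  simp only [energyDensity, Pi.add_apply, Pi.sub_apply] at h ⊢
  linarith

lemma contDiff_energyDensity (he : ∀ j, ContDiff ℝ n (uncurry (e j))) :
    ContDiff ℝ n (uncurry (energyDensity τ e)) :=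
  ((he 0).pow 2).add (contDiff_const.mul ((((he 1).pow 2).add ((he 2).pow 2)).add ((he 3).pow 2)))

lemma integral_energyDensity_sub_le_two_mul (hL : 0 ≤ L) (hτ : 0 ≤ τ)
    (he : ∀ j, Continuous (uncurry (e j))) (hf : ∀ j, Continuous (uncurry (f j))) (t : ℝ) :
    ∫ x in (0 : ℝ)..L, energyDensity τ (e - f) t x
      ≤ 2 * ((∫ x in (0 : ℝ)..L, energyDensity τ e t x)
        + ∫ x in (0 : ℝ)..L, energyDensity τ f t x) := by
  have integrable {g : Fin 4 → ℝ → ℝ → ℝ} (hg : ∀ j, Continuous (uncurry (g j))) :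
      IntervalIntegrable (energyDensity τ g t) volume 0 L :=
    intervalIntegrable_of_continuous_uncurry
      (contDiff_energyDensity (n := 0) fun j => contDiff_zero.2 (hg j)).continuous t 0 L
  rw [← intervalIntegral.integral_add (integrable he) (integrable hf),
    ← intervalIntegral.integral_const_mul]
  exact intervalIntegral.integral_mono hL (integrable fun j => (he j).sub (hf j))
    (((integrable he).add (integrable hf)).const_mul 2) fun x => energyDensity_sub_le hτ t x

lemma contDiff_energyFlux (hw : ContDiff ℝ n (uncurry w))
    (he : ∀ j, ContDiff ℝ n (uncurry (e j))) : ContDiff ℝ n (uncurry (energyFlux w e)) :=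
  ((((hw.mul ((he 0).pow 2)).neg.add (contDiff_const.mul ((he 0).pow 3))).sub
    (contDiff_const.mul ((he 0).mul (he 3)))).add (contDiff_const.mul ((he 1).mul (he 2))))

lemma periodic_energyFlux {t : ℝ} (hw : Periodic (w t) L) (he : ∀ j, Periodic (e j t) L) :
    Periodic (energyFlux w e t) L := fun x => by
  simp only [energyFlux, hw x, he _ x]

lemma pdt_energyDensity (he : ∀ j, Differentiable ℝ (uncurry (e j))) (t x : ℝ) :
    pdt (energyDensity τ e) t x = 2 * (e 0 t x * pdt (e 0) t x
      + τ * (e 1 t x * pdt (e 1) t x + e 2 t x * pdt (e 2) t x + e 3 t x * pdt (e 3) t x)) := by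
  have d (j : Fin 4) := (hasDerivAt_pdt (he j) t x).pow 2
  refine ((d 0).add ((((d 1).add (d 2)).add (d 3)).const_mul τ)).deriv.trans ?_
  simp only [Nat.cast_ofNat]
  ring

lemma pdx_energyFlux (hw : Differentiable ℝ (uncurry w))
    (he : ∀ j, Differentiable ℝ (uncurry (e j))) (t x : ℝ) :
    pdx (energyFlux w e) t x =
      -(pdx w t x * e 0 t x ^ 2 + 2 * w t x * e 0 t x * pdx (e 0) t x)
        + 2 * e 0 t x ^ 2 * pdx (e 0) t x
        - 2 * (pdx (e 0) t x * e 3 t x + e 0 t x * pdx (e 3) t x)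
        + 2 * (pdx (e 1) t x * e 2 t x + e 1 t x * pdx (e 2) t x) := by
  have d (j : Fin 4) := hasDerivAt_pdx (he j) t x
  refine ((((((hasDerivAt_pdx hw t x).mul ((d 0).pow 2)).neg.add
    (((d 0).pow 3).const_mul (2 / 3))).sub (((d 0).mul (d 3)).const_mul 2)).add
    (((d 1).mul (d 2)).const_mul 2))).deriv.trans ?_
  simp only [Pi.pow_apply, Nat.cast_ofNat]
  ring

lemma pdt_energyDensity_sub (hv : ∀ j, Differentiable ℝ (uncurry (v j)))
    (hq : ∀ j, Differentiable ℝ (uncurry (q j))) (t x : ℝ) :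
    pdt (energyDensity τ (v - q)) t x = pdx (energyFlux (v 0) (v - q)) t x
      - pdx (v 0) t x * (v - q) 0 t x ^ 2 - 2 * (v - q) 0 t x * (v - q) 2 t x
      - 2 * (v - q) 2 t x ^ 2
      + 2 * ∑ j, (v - q) j t x * (hyperbolicResidual τ v j t x - hyperbolicResidual τ q j t x) := by
  have he (j : Fin 4) : Differentiable ℝ (uncurry ((v - q) j)) := (hv j).sub (hq j)
  have ht (j : Fin 4) := pdt_sub (hv j) (hq j)
  have hx (j : Fin 4) := pdx_sub (hv j) (hq j)
  rw [pdt_energyDensity he, pdx_energyFlux (hv 0) he]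
  simp only [Fin.sum_univ_four, hyperbolicResidual, ht, hx, pdx_sq_div_two (hv 0),
    pdx_sq_div_two (hq 0), Pi.sub_apply]
  ring

lemma two_mul_mul_le_of_abs_le {s y r c : ℝ} (hs : 0 ≤ s) (hr : |r| ≤ s * c) :
    2 * (y * r) ≤ s * (y ^ 2 + c ^ 2) :=
  calc 2 * (y * r) ≤ 2 * (|y| * |r|) := by rw [← abs_mul]; gcongr; exact le_abs_self _
    _ ≤ 2 * (|y| * (s * c)) := by gcongr
    _ = s * (2 * |y| * c) := by ring
    _ ≤ s * (|y| ^ 2 + c ^ 2) := by gcongr; exact two_mul_le_add_sq |y| c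
    _ = s * (y ^ 2 + c ^ 2) := by rw [sq_abs]

lemma energy_source_le (hτ : τ ∈ Icc 0 1) {e r : Fin 4 → ℝ} {w : ℝ} (hw : |w| ≤ W)
    (hr : ∀ j, |r j| ≤ N * τ ^ residualOrder j) :
    -(w * e 0 ^ 2) - 2 * e 0 * e 2 - 2 * e 2 ^ 2 + 2 * ∑ j, e j * r j
      ≤ (W + 2) * (e 0 ^ 2 + τ * (e 1 ^ 2 + e 2 ^ 2 + e 3 ^ 2)) + 4 * N ^ 2 * τ ^ 2 := by
  obtain ⟨hτ0, hτ1⟩ := hτ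
  have hW : 0 ≤ W := (abs_nonneg w).trans hw
  have transport : -(w * e 0 ^ 2) ≤ W * e 0 ^ 2 := by
    rw [← neg_mul]
    gcongr
    exact (neg_le_abs w).trans hw
  have coupling : -(2 * e 0 * e 2) ≤ e 0 ^ 2 + e 2 ^ 2 := by linarith [sq_nonneg (e 0 + e 2)]
  have r₀ : 2 * (e 0 * r 0) ≤ 1 * (e 0 ^ 2 + (N * τ) ^ 2) :=
    two_mul_mul_le_of_abs_le zero_le_one (by simpa [residualOrder] using hr 0)
  have r₁ : 2 * (e 1 * r 1) ≤ τ * (e 1 ^ 2 + (N * τ) ^ 2) :=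
    two_mul_mul_le_of_abs_le hτ0 ((hr 1).trans_eq (by
      simp only [residualOrder, Matrix.cons_val]
      ring))
  have r₂ : 2 * (e 2 * r 2) ≤ 1 * (e 2 ^ 2 + (N * τ) ^ 2) :=
    two_mul_mul_le_of_abs_le zero_le_one (by simpa [residualOrder] using hr 2)
  have r₃ : 2 * (e 3 * r 3) ≤ τ * (e 3 ^ 2 + (N * τ) ^ 2) :=
    two_mul_mul_le_of_abs_le hτ0 ((hr 3).trans_eq (by
      simp only [residualOrder, Matrix.cons_val]
      ring))
  have hτN : τ * (N * τ) ^ 2 ≤ (N * τ) ^ 2 := mul_le_of_le_one_left (sq_nonneg _) hτ1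
  have rest : 0 ≤ (W + 1) * (τ * (e 1 ^ 2 + e 3 ^ 2)) + (W + 2) * (τ * e 2 ^ 2) := by positivity
  rw [Fin.sum_univ_four]
  linarith

lemma integral_energyDensity_sub_le (hL : 0 ≤ L) (hτ : τ ∈ Icc 0 1)
    (hv : ∀ j, ContDiff ℝ 1 (uncurry (v j))) (hq : ∀ j, ContDiff ℝ 1 (uncurry (q j)))
    (pv : ∀ j t, Periodic (v j t) L) (pq : ∀ j t, Periodic (q j t) L)
    (hW : ∀ t ∈ Icc 0 T, ∀ x ∈ Icc 0 L, |pdx (v 0) t x| ≤ W)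
    (hN : ∀ j, ∀ t ∈ Icc 0 T, ∀ x ∈ Icc 0 L,
      |hyperbolicResidual τ v j t x - hyperbolicResidual τ q j t x| ≤ N * τ ^ residualOrder j)
    {δ : ℝ} (hδ : ∫ x in (0 : ℝ)..L, energyDensity τ (v - q) 0 x ≤ δ)
    {t : ℝ} (ht : t ∈ Icc 0 T) :
    ∫ x in (0 : ℝ)..L, energyDensity τ (v - q) t x
      ≤ gronwallBound δ (W + 2) (L * (4 * N ^ 2 * τ ^ 2)) t := by
  have he (j : Fin 4) : ContDiff ℝ 1 (uncurry ((v - q) j)) := (hv j).sub (hq j)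
  refine integral_le_gronwallBound_of_balance hL (contDiff_energyDensity he)
    (contDiff_energyFlux (hv 0) he)
    (fun s => periodic_energyFlux (pv 0 s) fun j => (pv j s).sub (pq j s)) ?_ hδ ht
  intro s hs x hx
  rw [pdt_energyDensity_sub (fun j => (hv j).differentiable one_ne_zero)
    fun j => (hq j).differentiable one_ne_zero]
  have source := energy_source_le (e := fun j => (v - q) j s x) hτ (hW s hs x hx)
    fun j => hN j s hs x hx
  unfold energyDensity
  linarith

end Energy

section Consistency

/-- The tuple `(u, ∂ₓu, ∂ₓ²u, ∂ₓ³u)` approximated by the hyperbolic system. -/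
noncomputable def spaceJet (u : ℝ → ℝ → ℝ) : Fin 4 → ℝ → ℝ → ℝ := fun j => pdx^[j] u

/-- The first-order term in `τ` that has to be added to `spaceJet u` to cancel the residuals of
order `τ` in the second and fourth equations. -/
noncomputable def corrector (u : ℝ → ℝ → ℝ) : Fin 4 → ℝ → ℝ → ℝ :=
  ![0, pdt (pdx^[3] u), 0, -pdt (pdx u)]

/-- An approximate solution of the hyperbolic system built from a solution `u` of the
Kuramoto–Sivashinsky equation. -/
noncomputable def correctedJet (τ : ℝ) (u : ℝ → ℝ → ℝ) : Fin 4 → ℝ → ℝ → ℝ :=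
  spaceJet u + τ • corrector u

/-- The leading coefficients in `τ` of the residuals of `correctedJet τ u`. -/
noncomputable def defect (u : ℝ → ℝ → ℝ) : Fin 4 → ℝ → ℝ → ℝ :=
  ![pdx (corrector u 3), pdt (corrector u 1), pdt (pdx^[2] u) - pdx (corrector u 1),
    pdt (corrector u 3)]

variable {u : ℝ → ℝ → ℝ} {L τ : ℝ}

lemma contDiff_spaceJet (hu : ContDiff ℝ 5 (uncurry u)) (j : Fin 4) :
    ContDiff ℝ 2 (uncurry (spaceJet u j)) :=
  contDiff_pdx_iterate hu (by norm_cast; lia)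

lemma contDiff_corrector (hu : ContDiff ℝ 5 (uncurry u)) (j : Fin 4) :
    ContDiff ℝ 1 (uncurry (corrector u j)) := by
  have h (j : Fin 4) : ContDiff ℝ 1 (uncurry (pdt (spaceJet u j))) :=
    contDiff_pdt (contDiff_spaceJet hu j) one_add_one_eq_two.le
  match j with
  | 0 | 2 => exact contDiff_const
  | 1 => exact h 3
  | 3 => exact (h 1).neg

lemma continuous_defect (hu : ContDiff ℝ 5 (uncurry u)) (j : Fin 4) :
    Continuous (uncurry (defect u j)) := by
  have ht (j : Fin 4) : Continuous (uncurry (pdt (corrector u j))) :=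
    (contDiff_pdt (m := 0) (contDiff_corrector hu j) le_rfl).continuous
  have hx (j : Fin 4) : Continuous (uncurry (pdx (corrector u j))) :=
    (contDiff_pdx (m := 0) (contDiff_corrector hu j) le_rfl).continuous
  match j with
  | 0 => exact hx 3
  | 1 => exact ht 1
  | 2 =>
    exact (contDiff_pdt (m := 1) (contDiff_spaceJet hu 2) one_add_one_eq_two.le).continuous.sub
      (hx 1)
  | 3 => exact ht 3

lemma periodic_spaceJet (hper : ∀ t, Periodic (u t) L) (j : Fin 4) (t : ℝ) :
    Periodic (spaceJet u j t) L :=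
  periodic_pdx_iterate hper j t

lemma periodic_corrector (hper : ∀ t, Periodic (u t) L) (j : Fin 4) (t : ℝ) :
    Periodic (corrector u j t) L := by
  match j with
  | 0 | 2 => exact fun _ => rfl
  | 1 => exact periodic_pdt (periodic_pdx_iterate hper 3) t
  | 3 => exact fun x => congrArg Neg.neg (periodic_pdt (periodic_pdx hper) t x)

lemma contDiff_correctedJet (hu : ContDiff ℝ 5 (uncurry u)) (j : Fin 4) :
    ContDiff ℝ 1 (uncurry (correctedJet τ u j)) :=
  ((contDiff_spaceJet hu j).of_le one_le_two).add ((contDiff_corrector hu j).const_smul τ)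

lemma periodic_correctedJet (hper : ∀ t, Periodic (u t) L) (j : Fin 4) (t : ℝ) :
    Periodic (correctedJet τ u j t) L :=
  (periodic_spaceJet hper j t).add ((periodic_corrector hper j t).smul τ)

lemma correctedJet_zero : correctedJet τ u 0 = u := by
  simp [correctedJet, spaceJet, corrector]

lemma correctedJet_two : correctedJet τ u 2 = pdx^[2] u := by
  simp [correctedJet, spaceJet, corrector]

lemma pdt_correctedJet (hu : ContDiff ℝ 5 (uncurry u)) (j : Fin 4) (t x : ℝ) :
    pdt (correctedJet τ u j) t x = pdt (spaceJet u j) t x + τ * pdt (corrector u j) t x := by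
  have hJ := (contDiff_spaceJet hu j).differentiable two_ne_zero
  have hC := (contDiff_corrector hu j).differentiable one_ne_zero
  have h : pdt (correctedJet τ u j) = pdt (spaceJet u j) + τ • pdt (corrector u j) := by
    rw [← pdt_const_smul τ hC]
    exact pdt_add hJ (hC.const_smul τ)
  exact congrFun₂ h t x

lemma pdx_correctedJet (hu : ContDiff ℝ 5 (uncurry u)) (j : Fin 4) (t x : ℝ) :
    pdx (correctedJet τ u j) t x = pdx (spaceJet u j) t x + τ * pdx (corrector u j) t x := by
  have hJ := (contDiff_spaceJet hu j).differentiable two_ne_zero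
  have hC := (contDiff_corrector hu j).differentiable one_ne_zero
  have h : pdx (correctedJet τ u j) = pdx (spaceJet u j) + τ • pdx (corrector u j) := by
    rw [← pdx_const_smul τ hC]
    exact pdx_add hJ (hC.const_smul τ)
  exact congrFun₂ h t x

lemma hyperbolicResidual_correctedJet (hu : ContDiff ℝ 5 (uncurry u)) {t x : ℝ}
    (heq : pdt u t x + pdx (fun s y => u s y ^ 2 / 2) t x + pdx^[2] u t x + pdx^[4] u t x = 0)
    (j : Fin 4) :
    hyperbolicResidual τ (correctedJet τ u) j t x = τ ^ residualOrder j * defect u j t x := by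
  match j with
  | 0 =>
    have hJ : pdx (spaceJet u 3) = pdx^[4] u := (iterate_succ_apply' pdx 3 u).symm
    rw [hyperbolicResidual, correctedJet_zero, correctedJet_two, pdx_correctedJet hu, hJ]
    change _ = τ ^ 1 * pdx (corrector u 3) t x
    linear_combination heq
  | 1 =>
    have hJ : pdx (pdx^[2] u) = pdx^[3] u := (iterate_succ_apply' pdx 2 u).symm
    rw [hyperbolicResidual, correctedJet_two, pdt_correctedJet hu, hJ]
    change τ * (pdt (pdx u) t x + _) - (_ - (pdx^[3] u t x + τ * -pdt (pdx u) t x))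
      = τ ^ 2 * pdt (corrector u 1) t x
    ring
  | 2 =>
    rw [hyperbolicResidual, correctedJet_two, pdx_correctedJet hu]
    change _ - (pdx^[2] u t x + _ - _) = τ ^ 1 * (pdt (pdx^[2] u) t x - pdx (corrector u 1) t x)
    ring
  | 3 =>
    rw [hyperbolicResidual, correctedJet_zero, pdt_correctedJet hu]
    change τ * (pdt (pdx^[3] u) t x + _) + (_ - (pdx u t x + τ * pdt (pdx^[3] u) t x))
      = τ ^ 2 * pdt (corrector u 3) t x
    ring

end Consistency

section Convergence

/-- The `τ`-weighted sum of the `L²(0, L)` norms of the components of `e` at time `t`. -/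
noncomputable def weightedL2Norm (L τ : ℝ) (e : Fin 4 → ℝ → ℝ → ℝ) (t : ℝ) : ℝ :=
  √(∫ x in (0 : ℝ)..L, e 0 t x ^ 2) + √τ * √(∫ x in (0 : ℝ)..L, e 1 t x ^ 2)
    + √τ * √(∫ x in (0 : ℝ)..L, e 2 t x ^ 2) + √τ * √(∫ x in (0 : ℝ)..L, e 3 t x ^ 2)

variable {L T τ W A N : ℝ} {e q : Fin 4 → ℝ → ℝ → ℝ} {u : ℝ → ℝ → ℝ}

lemma sqrt_mul_sqrt_integral_sq_le {g η : ℝ → ℝ} {σ : ℝ} (hL : 0 ≤ L) (hσ : 0 ≤ σ)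
    (hg : Continuous g) (hη : Continuous η) (h : ∀ x, σ * g x ^ 2 ≤ η x) :
    √σ * √(∫ x in (0 : ℝ)..L, g x ^ 2) ≤ √(∫ x in (0 : ℝ)..L, η x) := by
  rw [← Real.sqrt_mul hσ, ← intervalIntegral.integral_const_mul]
  exact Real.sqrt_le_sqrt (intervalIntegral.integral_mono hL
    (((hg.pow 2).const_mul σ).intervalIntegrable 0 L) (hη.intervalIntegrable 0 L) h)

lemma weightedL2Norm_le_four_mul_sqrt (hL : 0 ≤ L) (hτ : 0 ≤ τ)
    (he : ∀ j, Continuous (uncurry (e j))) (t : ℝ) :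
    weightedL2Norm L τ e t ≤ 4 * √(∫ x in (0 : ℝ)..L, energyDensity τ e t x) := by
  have hη : Continuous (energyDensity τ e t) :=
    (contDiff_energyDensity (n := 0) fun j => contDiff_zero.2 (he j)).continuous.comp
      (Continuous.prodMk_right t)
  have he' (j : Fin 4) : Continuous (e j t) := (he j).comp (Continuous.prodMk_right t)
  have hsq (j : Fin 4) (x : ℝ) : 0 ≤ τ * e j t x ^ 2 := mul_nonneg hτ (sq_nonneg _)
  have h₀ := sqrt_mul_sqrt_integral_sq_le hL zero_le_one (he' 0) hη fun x => by
    unfold energyDensity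
    linarith [hsq 1 x, hsq 2 x, hsq 3 x]
  have h₁ := sqrt_mul_sqrt_integral_sq_le hL hτ (he' 1) hη fun x => by
    unfold energyDensity
    linarith [sq_nonneg (e 0 t x), hsq 2 x, hsq 3 x]
  have h₂ := sqrt_mul_sqrt_integral_sq_le hL hτ (he' 2) hη fun x => by
    unfold energyDensity
    linarith [sq_nonneg (e 0 t x), hsq 1 x, hsq 3 x]
  have h₃ := sqrt_mul_sqrt_integral_sq_le hL hτ (he' 3) hη fun x => by
    unfold energyDensity
    linarith [sq_nonneg (e 0 t x), hsq 1 x, hsq 2 x]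
  rw [Real.sqrt_one, one_mul] at h₀
  unfold weightedL2Norm
  linarith

lemma energyDensity_smul_corrector_le (hτ : τ ≤ 1) {t x : ℝ}
    (hA : ∀ j, |corrector u j t x| ≤ A) :
    energyDensity τ (τ • corrector u) t x ≤ τ ^ 2 * (2 * A ^ 2) := by
  have hsq (j : Fin 4) : corrector u j t x ^ 2 ≤ A ^ 2 := sq_le_sq.2 ((hA j).trans (le_abs_self A))
  calc energyDensity τ (τ • corrector u) t x
      = τ * (τ ^ 2 * (corrector u 1 t x ^ 2 + corrector u 3 t x ^ 2)) := by
        simp only [energyDensity, Pi.smul_apply, smul_eq_mul, corrector, Matrix.cons_val,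
          Pi.zero_apply]
        ring
    _ ≤ 1 * (τ ^ 2 * (A ^ 2 + A ^ 2)) := by
        have h₁ := hsq 1
        have h₃ := hsq 3
        gcongr
    _ = τ ^ 2 * (2 * A ^ 2) := by ring

lemma integral_energyDensity_smul_corrector_le (hL : 0 ≤ L) (hτ : τ ≤ 1)
    (hu : ContDiff ℝ 5 (uncurry u)) {t : ℝ} (hA : ∀ j, ∀ x ∈ Icc 0 L, |corrector u j t x| ≤ A) :
    ∫ x in (0 : ℝ)..L, energyDensity τ (τ • corrector u) t x ≤ τ ^ 2 * (L * (2 * A ^ 2)) := by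
  have hc : Continuous (uncurry (energyDensity τ (τ • corrector u))) :=
    (contDiff_energyDensity fun j => (contDiff_corrector hu j).const_smul τ).continuous
  calc ∫ x in (0 : ℝ)..L, energyDensity τ (τ • corrector u) t x
      ≤ ∫ _ in (0 : ℝ)..L, τ ^ 2 * (2 * A ^ 2) :=
        intervalIntegral.integral_mono_on hL (intervalIntegrable_of_continuous_uncurry hc t 0 L)
          intervalIntegrable_const fun x hx =>
            energyDensity_smul_corrector_le hτ fun j => hA j x hx
    _ = τ ^ 2 * (L * (2 * A ^ 2)) := by
        rw [intervalIntegral.integral_const, smul_eq_mul]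
        ring

lemma integral_energyDensity_correctedJet_sub_le (hL : 0 ≤ L) (hτ : τ ∈ Icc 0 1)
    (hu : ContDiff ℝ 5 (uncurry u)) (huper : ∀ t, Periodic (u t) L)
    (hueq : ∀ t ∈ Icc 0 T, ∀ x, pdt u t x + pdx (fun s y => u s y ^ 2 / 2) t x
      + pdx^[2] u t x + pdx^[4] u t x = 0)
    (hq : ∀ j, ContDiff ℝ 1 (uncurry (q j))) (hqper : ∀ j t, Periodic (q j t) L)
    (hqeq : ∀ j, ∀ t ∈ Icc 0 T, ∀ x, hyperbolicResidual τ q j t x = 0)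
    (hq0 : ∀ j x, q j 0 x = spaceJet u j 0 x)
    (hW : ∀ t ∈ Icc 0 T, ∀ x ∈ Icc 0 L, |pdx u t x| ≤ W)
    (hA : ∀ j, ∀ t ∈ Icc 0 T, ∀ x ∈ Icc 0 L, |corrector u j t x| ≤ A)
    (hN : ∀ j, ∀ t ∈ Icc 0 T, ∀ x ∈ Icc 0 L, |defect u j t x| ≤ N)
    {t : ℝ} (ht : t ∈ Icc 0 T) :
    ∫ x in (0 : ℝ)..L, energyDensity τ (correctedJet τ u - q) t x
      ≤ τ ^ 2 * gronwallBound (L * (2 * A ^ 2)) (W + 2) (L * (4 * N ^ 2)) T := by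
  have h0 : (0 : ℝ) ∈ Icc 0 T := ⟨le_rfl, ht.1.trans ht.2⟩
  have hW0 : 0 ≤ W := (abs_nonneg _).trans (hW t ht 0 ⟨le_rfl, hL⟩)
  have initial : ∫ x in (0 : ℝ)..L, energyDensity τ (correctedJet τ u - q) 0 x
      ≤ τ ^ 2 * (L * (2 * A ^ 2)) := by
    refine le_of_eq_of_le ?_
      (integral_energyDensity_smul_corrector_le hL hτ.2 hu fun j x hx => hA j 0 h0 x hx)
    simp only [energyDensity, correctedJet, Pi.sub_apply, Pi.add_apply, hq0, add_sub_cancel_left]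
  have residual_le (j : Fin 4) (s : ℝ) (hs : s ∈ Icc 0 T) (x : ℝ) (hx : x ∈ Icc 0 L) :
      |hyperbolicResidual τ (correctedJet τ u) j s x - hyperbolicResidual τ q j s x|
        ≤ N * τ ^ residualOrder j := by
    rw [hyperbolicResidual_correctedJet hu (hueq s hs x), hqeq j s hs x, sub_zero,
      abs_mul, abs_of_nonneg (pow_nonneg hτ.1 _), mul_comm]
    exact mul_le_mul_of_nonneg_right (hN j s hs x hx) (pow_nonneg hτ.1 _)
  calc ∫ x in (0 : ℝ)..L, energyDensity τ (correctedJet τ u - q) t x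
      ≤ gronwallBound (τ ^ 2 * (L * (2 * A ^ 2))) (W + 2) (L * (4 * N ^ 2 * τ ^ 2)) t :=
        integral_energyDensity_sub_le hL hτ (contDiff_correctedJet hu) hq
          (periodic_correctedJet huper) hqper (by rwa [correctedJet_zero]) residual_le initial ht
    _ = τ ^ 2 * gronwallBound (L * (2 * A ^ 2)) (W + 2) (L * (4 * N ^ 2)) t := by
        rw [← gronwallBound_mul_mul]
        ring_nf
    _ ≤ τ ^ 2 * gronwallBound (L * (2 * A ^ 2)) (W + 2) (L * (4 * N ^ 2)) T := by
        gcongr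
        exact gronwallBound_mono (by positivity) (by positivity) (by positivity) ht.2

theorem kuramoto_sivashinsky_hyperbolic_convergence_general (hL : 0 ≤ L)
    (hu : ContDiff ℝ 5 (uncurry u)) (huper : ∀ t, Periodic (u t) L)
    (hueq : ∀ t ∈ Icc 0 T, ∀ x, pdt u t x + pdx (fun s y => u s y ^ 2 / 2) t x
      + pdx^[2] u t x + pdx^[4] u t x = 0) :
    ∃ C > 0, ∀ τ ∈ Icc (0 : ℝ) 1, ∀ q : Fin 4 → ℝ → ℝ → ℝ,
      (∀ j, ContDiff ℝ 1 (uncurry (q j))) → (∀ j t, Periodic (q j t) L) →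
      (∀ j, ∀ t ∈ Icc 0 T, ∀ x, hyperbolicResidual τ q j t x = 0) →
      (∀ j x, q j 0 x = spaceJet u j 0 x) →
      ∀ t ∈ Icc 0 T, weightedL2Norm L τ (spaceJet u - q) t ≤ C * τ := by
  have cJ (j : Fin 4) := (contDiff_spaceJet hu j).continuous
  have cC (j : Fin 4) := (contDiff_corrector hu j).continuous
  obtain ⟨W, hW⟩ := exists_abs_le_of_continuous cJ 0 T 0 L
  obtain ⟨A, hA⟩ := exists_abs_le_of_continuous cC 0 T 0 L
  obtain ⟨N, hN⟩ := exists_abs_le_of_continuous (continuous_defect hu) 0 T 0 L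
  set G := gronwallBound (L * (2 * A ^ 2)) (W + 2) (L * (4 * N ^ 2)) T
  set R := 2 * (G + L * (2 * A ^ 2))
  refine ⟨4 * √R + 1, by positivity, fun τ hτ q hq hqper hqeq hq0 t ht => ?_⟩
  have cq (j : Fin 4) := (hq j).continuous
  have hcorrected := integral_energyDensity_correctedJet_sub_le hL hτ hu huper hueq hq hqper hqeq
    hq0 (hW 1) hA hN ht
  have hcorrector :=
    integral_energyDensity_smul_corrector_le hL hτ.2 hu fun j x hx => hA j t ht x hx
  have henergy : ∫ x in (0 : ℝ)..L, energyDensity τ (spaceJet u - q) t x ≤ τ ^ 2 * R := by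
    have hsub : spaceJet u - q = correctedJet τ u - q - τ • corrector u := by
      unfold correctedJet
      abel
    rw [hsub]
    refine (integral_energyDensity_sub_le_two_mul (e := correctedJet τ u - q)
      (f := τ • corrector u) hL hτ.1
      (fun j => (contDiff_correctedJet hu j).continuous.sub (cq j))
      (fun j => (cC j).const_smul τ) t).trans ?_
    linarith
  calc weightedL2Norm L τ (spaceJet u - q) t
      ≤ 4 * √(∫ x in (0 : ℝ)..L, energyDensity τ (spaceJet u - q) t x) :=
        weightedL2Norm_le_four_mul_sqrt (e := spaceJet u - q) hL hτ.1 (fun j => (cJ j).sub (cq j)) t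
    _ ≤ 4 * √(τ ^ 2 * R) := by gcongr
    _ = 4 * √R * τ := by rw [Real.sqrt_mul (sq_nonneg τ), Real.sqrt_sq hτ.1]; ring
    _ ≤ (4 * √R + 1) * τ := by linarith [hτ.1]

end Convergence

/-- Convergence of the hyperbolic approximation to the Kuramoto–Sivashinsky
equation `∂_t u + ∂_x (u²/2) + ∂_x² u + ∂_x⁴ u = 0` (Theorem 3.4 of the paper,
for classical solutions of the hyperbolic approximation). -/
theorem kuramoto_sivashinsky_hyperbolic_convergence
    (L T : ℝ) (hL : 0 < L) (hT : 0 < T)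
    (u : ℝ → ℝ → ℝ) (hu : ContDiff ℝ (⊤ : ℕ∞) (Function.uncurry u))
    (huper : ∀ t, Function.Periodic (u t) L)
    (hubd : ∀ i j : ℕ, ∃ M, ∀ t x : ℝ, |pdt^[i] (pdx^[j] u) t x| ≤ M)
    (hueq : ∀ t ∈ Set.Icc (0:ℝ) T, ∀ x : ℝ,
      pdt u t x + pdx (fun s y => u s y ^ 2 / 2) t x
        + pdx^[2] u t x + pdx^[4] u t x = 0) :
    ∃ C > 0, ∀ τ ∈ Set.Ioc (0:ℝ) 1, ∀ q₀ q₁ q₂ q₃ : ℝ → ℝ → ℝ,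
      ContDiff ℝ 1 (Function.uncurry q₀) →
      ContDiff ℝ 1 (Function.uncurry q₁) →
      ContDiff ℝ 1 (Function.uncurry q₂) →
      ContDiff ℝ 1 (Function.uncurry q₃) →
      (∀ t, Function.Periodic (q₀ t) L) →
      (∀ t, Function.Periodic (q₁ t) L) →
      (∀ t, Function.Periodic (q₂ t) L) →
      (∀ t, Function.Periodic (q₃ t) L) →
      (∀ t ∈ Set.Icc (0:ℝ) T, ∀ x : ℝ,
        pdt q₀ t x + pdx (fun s y => q₀ s y ^ 2 / 2) t x
          + q₂ t x + pdx q₃ t x = 0) →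
      (∀ t ∈ Set.Icc (0:ℝ) T, ∀ x : ℝ,
        τ * pdt q₁ t x - (pdx q₂ t x - q₃ t x) = 0) →
      (∀ t ∈ Set.Icc (0:ℝ) T, ∀ x : ℝ,
        τ * pdt q₂ t x - (pdx q₁ t x - q₂ t x) = 0) →
      (∀ t ∈ Set.Icc (0:ℝ) T, ∀ x : ℝ,
        τ * pdt q₃ t x + (pdx q₀ t x - q₁ t x) = 0) →
      (∀ x : ℝ, q₀ 0 x = u 0 x) →
      (∀ x : ℝ, q₁ 0 x = pdx u 0 x) →
      (∀ x : ℝ, q₂ 0 x = pdx^[2] u 0 x) →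
      (∀ x : ℝ, q₃ 0 x = pdx^[3] u 0 x) →
      ∀ t ∈ Set.Icc (0:ℝ) T,
        Real.sqrt (∫ x in (0:ℝ)..L, (u t x - q₀ t x) ^ 2)
          + Real.sqrt τ * Real.sqrt (∫ x in (0:ℝ)..L, (pdx u t x - q₁ t x) ^ 2)
          + Real.sqrt τ * Real.sqrt (∫ x in (0:ℝ)..L, (pdx^[2] u t x - q₂ t x) ^ 2)
          + Real.sqrt τ * Real.sqrt (∫ x in (0:ℝ)..L, (pdx^[3] u t x - q₃ t x) ^ 2)
          ≤ C * τ := by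
  obtain ⟨C, hC, h⟩ := kuramoto_sivashinsky_hyperbolic_convergence_general hL.le
    (contDiff_infty.1 hu 5) huper hueq
  refine ⟨C, hC, fun τ hτ q₀ q₁ q₂ q₃ s₀ s₁ s₂ s₃ p₀ p₁ p₂ p₃ e₀ e₁ e₂ e₃ i₀ i₁ i₂ i₃ => ?_⟩
  exact h τ (Ioc_subset_Icc_self hτ) ![q₀, q₁, q₂, q₃]
    (fun | 0 => s₀ | 1 => s₁ | 2 => s₂ | 3 => s₃) (fun | 0 => p₀ | 1 => p₁ | 2 => p₂ | 3 => p₃)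
    (fun | 0 => e₀ | 1 => e₁ | 2 => e₂ | 3 => e₃) (fun | 0 => i₀ | 1 => i₁ | 2 => i₂ | 3 => i₃)
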